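/- Let Q be a density matrix on the tensor product H_A ⊗ H_B of finite-dimensional Hilbert spaces, with reduced states Q_A = Tr_B Q and Q_B = Tr_A Q. For r > 1 and s ≥ 1/r, the triangle inequality |HY_r^s(Q_A) − HY_r^s(Q_B)| ≤ HY_r^s(Q) holds. -/

import Mathlib

open scoped ComplexOrder Matrix

/-- The Hu–Ye unified entropy of a Hermitian matrix, computed from its eigenvalues. -/
noncomputable def HY {d : ℕ} {Q : Matrix (Fin d) (Fin d) ℂ}
    (hQ : Q.IsHermitian) (r s : ℝ) : ℝ :=
  (1 / ((1 - r) * s)) * ((∑ i, hQ.eigenvalues i ^ r) ^ s - 1)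

/-- Reduced state on subsystem A (partial trace over B). -/
noncomputable def ptrB {dA dB : ℕ} (Q : Matrix (Fin dA × Fin dB) (Fin dA × Fin dB) ℂ) :
    Matrix (Fin dA) (Fin dA) ℂ :=
  fun a a' => ∑ b, Q (a, b) (a', b)

/-- Reduced state on subsystem B (partial trace over A). -/
noncomputable def ptrA {dA dB : ℕ} (Q : Matrix (Fin dA × Fin dB) (Fin dA × Fin dB) ℂ) :
    Matrix (Fin dB) (Fin dB) ℂ :=
  fun b b' => ∑ a, Q (a, b) (a, b')

/-!
For `ρ ≥ 0` put `‖ρ‖_r = (Tr ρʳ)^(1/r)`. Audenaert's inequality reads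
`‖ρ_A‖_r + ‖ρ_B‖_r ≤ Tr ρ + ‖ρ‖_r`. A local unitary diagonalises both marginals, and passing from
`ρ` to its diagonal can only decrease `Tr ρʳ`, so it suffices to treat a nonnegative array `p i j`.
If `g` and `k`, of `ℓ^q` norm at most `1`, are Hölder dual to the two marginals of `p`, then
`0 ≤ ∑ p i j (1 - g i) (1 - k j)` together with Hölder's inequality for `g ⊗ k` gives the claim.

If `C` purifies `Q`, then `Q_BC` has the nonzero spectrum of `Q_A`, and its marginals have those of
`Q_B` and `Q`. Audenaert's inequality for `Q_BC` becomes `‖Q_B‖_r + ‖Q‖_r ≤ 1 + ‖Q_A‖_r`. Since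
these norms are at most `1` and `t ↦ t^(r s)` is convex, the norms may be replaced by
`(Tr ρʳ)^s`, which is one half of the triangle inequality; exchanging `A` and `B` gives the other.
-/

section ScalarInequalities

theorem convexOn_add_le_add_of_mem_segment {E : Type*} [AddCommGroup E] [Module ℝ E]
    {s : Set E} {f : E → ℝ} (hf : ConvexOn ℝ s f) {a b x y : E} (ha : a ∈ s) (hb : b ∈ s)
    (hx : x ∈ segment ℝ a b) (hxy : x + y = a + b) : f x + f y ≤ f a + f b := by
  obtain ⟨t, u, ht, hu, htu, rfl⟩ := hx
  have hy : y = u • a + t • b := by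
    rw [← add_right_inj (t • a + u • b), hxy, ← one_smul ℝ (a + b), ← htu]
    module
  have hfx := hf.2 ha hb ht hu htu
  have hfy := hf.2 ha hb hu ht (by rwa [add_comm])
  simp only [smul_eq_mul] at hfx hfy
  rw [hy]
  linear_combination hfx + hfy + htu * (f a + f b)

theorem rpow_add_rpow_le_one_add_rpow {x y z p : ℝ} (hx₀ : 0 ≤ x) (hx₁ : x ≤ 1) (hy₀ : 0 ≤ y)
    (hy₁ : y ≤ 1) (hz : 0 ≤ z) (h : x + y ≤ 1 + z) (hp : 1 ≤ p) :
    x ^ p + y ^ p ≤ 1 + z ^ p := by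
  rcases le_total (x + y) 1 with hxy | hxy
  · have hxp := Real.rpow_le_self_of_le_one hx₀ hx₁ hp
    have hyp := Real.rpow_le_self_of_le_one hy₀ hy₁ hp
    linarith [Real.rpow_nonneg hz p]
  · have hw : 0 ≤ x + y - 1 := by linarith
    calc x ^ p + y ^ p ≤ (x + y - 1) ^ p + 1 ^ p := by
          refine convexOn_add_le_add_of_mem_segment (convexOn_rpow hp) hw
            (Set.mem_Ici.2 zero_le_one) ?_ (by ring)
          rw [segment_eq_Icc (by linarith)]
          exact ⟨by linarith, hx₁⟩
      _ ≤ z ^ p + 1 := by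
          rw [Real.one_rpow]
          gcongr
          linarith
      _ = 1 + z ^ p := add_comm _ _

theorem exists_Lq_dual_le_one {ι : Type*} [Fintype ι] {f : ι → ℝ} (hf : ∀ i, 0 ≤ f i) {p q : ℝ}
    (hpq : p.HolderConjugate q) :
    ∃ g : ι → ℝ, (∀ i, 0 ≤ g i) ∧ (∀ i, g i ≤ 1) ∧ ∑ i, g i ^ q ≤ 1 ∧
      ∑ i, f i * g i = (∑ i, f i ^ p) ^ (1 / p) := by
  lift f to ι → NNReal using hf
  obtain ⟨g, hgq : ∑ i, g i ^ q ≤ 1, hfg : ∑ i, f i * g i = _⟩ :=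
    (NNReal.isGreatest_Lp Finset.univ f hpq).1
  have hg : ∀ i, g i ≤ 1 := fun i => by
    by_contra! hi
    refine (NNReal.one_lt_rpow hi hpq.symm.pos).not_ge (le_trans ?_ hgq)
    exact Finset.single_le_sum_of_canonicallyOrdered (f := fun i => g i ^ q) (Finset.mem_univ i)
  refine ⟨fun i => g i, fun i => (g i).2, fun i => mod_cast hg i, ?_, ?_⟩
  · beta_reduce
    exact_mod_cast hgq
  · beta_reduce
    exact_mod_cast hfg

theorem sum_rpow_marginals_le {ι κ : Type*} [Fintype ι] [Fintype κ] {p : ι → κ → ℝ}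
    (hp : ∀ i j, 0 ≤ p i j) {r : ℝ} (hr : 1 < r) :
    (∑ i, (∑ j, p i j) ^ r) ^ (1 / r) + (∑ j, (∑ i, p i j) ^ r) ^ (1 / r) ≤
      ∑ i, ∑ j, p i j + (∑ x : ι × κ, p x.1 x.2 ^ r) ^ (1 / r) := by
  have hrq := Real.HolderConjugate.conjExponent hr
  set q := r.conjExponent
  obtain ⟨g, hg₀, hg₁, hgq, hg⟩ :=
    exists_Lq_dual_le_one (fun i => Finset.sum_nonneg fun j _ => hp i j) hrq
  obtain ⟨k, hk₀, hk₁, hkq, hk⟩ :=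
    exists_Lq_dual_le_one (fun j => Finset.sum_nonneg fun i _ => hp i j) hrq
  have dual_tensor_le_one : ∑ x : ι × κ, (g x.1 * k x.2) ^ q ≤ 1 :=
    calc ∑ x : ι × κ, (g x.1 * k x.2) ^ q = (∑ i, g i ^ q) * ∑ j, k j ^ q := by
          simp only [Real.mul_rpow (hg₀ _) (hk₀ _), Fintype.sum_prod_type, Finset.sum_mul_sum]
      _ ≤ 1 := mul_le_one₀ hgq (Finset.sum_nonneg fun j _ => Real.rpow_nonneg (hk₀ j) q) hkq
  have holder : ∑ x : ι × κ, p x.1 x.2 * (g x.1 * k x.2) ≤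
      (∑ x : ι × κ, p x.1 x.2 ^ r) ^ (1 / r) := by
    have hgk : ∀ x : ι × κ, 0 ≤ g x.1 * k x.2 := fun x => mul_nonneg (hg₀ _) (hk₀ _)
    refine (Real.inner_le_Lp_mul_Lq_of_nonneg Finset.univ hrq (fun x _ => hp x.1 x.2)
      fun x _ => hgk x).trans (mul_le_of_le_one_right ?_ ?_)
    · exact Real.rpow_nonneg (Finset.sum_nonneg fun x _ => Real.rpow_nonneg (hp _ _) r) _
    · exact Real.rpow_le_one (Finset.sum_nonneg fun x _ => Real.rpow_nonneg (hgk x) q)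
        dual_tensor_le_one hrq.symm.one_div_nonneg
  -- `p g + p k ≤ p + p g k` is `0 ≤ p (1 - g) (1 - k)`.
  have pointwise : ∀ i j, p i j * g i + p i j * k j ≤ p i j + p i j * (g i * k j) := fun i j => by
    linear_combination mul_nonneg (hp i j)
      (mul_nonneg (sub_nonneg.2 (hg₁ i)) (sub_nonneg.2 (hk₁ j)))
  calc (∑ i, (∑ j, p i j) ^ r) ^ (1 / r) + (∑ j, (∑ i, p i j) ^ r) ^ (1 / r)
      = ∑ i, ∑ j, (p i j * g i + p i j * k j) := by
        rw [← hg, ← hk]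
        simp only [Finset.sum_mul, Finset.sum_add_distrib]
        rw [Finset.sum_comm (f := fun j i => p i j * k j)]
    _ ≤ ∑ i, ∑ j, (p i j + p i j * (g i * k j)) :=
        Finset.sum_le_sum fun i _ => Finset.sum_le_sum fun j _ => pointwise i j
    _ = ∑ i, ∑ j, p i j + ∑ x : ι × κ, p x.1 x.2 * (g x.1 * k x.2) := by
        simp only [Finset.sum_add_distrib, Fintype.sum_prod_type]
    _ ≤ _ := by gcongr

end ScalarInequalities

section Diagonal

variable {𝕜 n : Type*} [RCLike 𝕜] [Fintype n] [DecidableEq n]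

lemma sum_norm_sq_row_of_mem_unitaryGroup {U : Matrix n n 𝕜} (hU : U ∈ Matrix.unitaryGroup n 𝕜)
    (i : n) : ∑ j, ‖U i j‖ ^ 2 = 1 := by
  have hii := congrFun₂ (Matrix.mem_unitaryGroup_iff.1 hU) i i
  simp only [Matrix.mul_apply, Matrix.star_apply, RCLike.star_def, RCLike.mul_conj,
    Matrix.one_apply_eq] at hii
  exact_mod_cast hii

lemma sum_norm_sq_col_of_mem_unitaryGroup {U : Matrix n n 𝕜} (hU : U ∈ Matrix.unitaryGroup n 𝕜)
    (j : n) : ∑ i, ‖U i j‖ ^ 2 = 1 := by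
  simpa only [Matrix.star_apply, norm_star] using
    sum_norm_sq_row_of_mem_unitaryGroup (Unitary.star_mem hU) j

lemma re_diag_eq_sum_norm_sq_mul_eigenvalues {A : Matrix n n 𝕜} (hA : A.IsHermitian) (i : n) :
    RCLike.re (A i i) =
      ∑ j, ‖(hA.eigenvectorUnitary : Matrix n n 𝕜) i j‖ ^ 2 * hA.eigenvalues j := by
  have hii := congrFun₂ hA.spectral_theorem i i
  rw [Unitary.conjStarAlgAut_apply, Matrix.mul_apply] at hii
  rw [hii, map_sum]
  refine Finset.sum_congr rfl fun j _ => ?_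
  rw [Matrix.mul_diagonal, Matrix.star_apply, mul_right_comm, RCLike.star_def, RCLike.mul_conj,
    Function.comp_apply]
  norm_cast

lemma exists_unitary_conj_diag_eq_eigenvalues {A : Matrix n n 𝕜} (hA : A.IsHermitian) :
    ∃ U ∈ Matrix.unitaryGroup n 𝕜, ∀ i, RCLike.re ((Uᴴ * A * U) i i) = hA.eigenvalues i := by
  refine ⟨_, hA.eigenvectorUnitary.2, fun i => ?_⟩
  have hconj := hA.conjStarAlgAut_star_eigenvectorUnitary
  rw [Unitary.conjStarAlgAut_star_apply, Matrix.star_eq_conjTranspose] at hconj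
  rw [hconj, Matrix.diagonal_apply_eq, Function.comp_apply, RCLike.ofReal_re]

theorem sum_convexOn_diag_le_sum_eigenvalues {A : Matrix n n 𝕜} (hA : A.IsHermitian) {s : Set ℝ}
    {f : ℝ → ℝ} (hf : ConvexOn ℝ s f) (hs : ∀ i, hA.eigenvalues i ∈ s) :
    ∑ i, f (RCLike.re (A i i)) ≤ ∑ i, f (hA.eigenvalues i) := by
  obtain ⟨U, hU, hdiag⟩ : ∃ U ∈ Matrix.unitaryGroup n 𝕜, ∀ i,
      RCLike.re (A i i) = ∑ j, ‖U i j‖ ^ 2 * hA.eigenvalues j :=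
    ⟨_, hA.eigenvectorUnitary.2, re_diag_eq_sum_norm_sq_mul_eigenvalues hA⟩
  calc ∑ i, f (RCLike.re (A i i)) ≤ ∑ i, ∑ j, ‖U i j‖ ^ 2 * f (hA.eigenvalues j) := by
        refine Finset.sum_le_sum fun i _ => ?_
        rw [hdiag]
        exact hf.map_sum_le (fun j _ => sq_nonneg _) (sum_norm_sq_row_of_mem_unitaryGroup hU i)
          fun j _ => hs j
    _ = ∑ j, f (hA.eigenvalues j) := by
        rw [Finset.sum_comm]
        simp only [← Finset.sum_mul, sum_norm_sq_col_of_mem_unitaryGroup hU, one_mul]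

end Diagonal

section TraceRpow

variable {𝕜 m n : Type*} [RCLike 𝕜] [Fintype m] [DecidableEq m] [Fintype n] [DecidableEq n]

/-- The trace `Tr Aʳ` of a power of a positive semidefinite matrix. Summing over the roots of the
characteristic polynomial needs no proof that `A` is Hermitian, and makes invariance under
transposition, reindexing and `A * B ↦ B * A` immediate. For a spectrum that is not real and
nonnegative the value has no meaning. -/
noncomputable def traceRpow (A : Matrix n n 𝕜) (r : ℝ) : ℝ :=
  (A.charpoly.roots.map fun z => RCLike.re z ^ r).sum

lemma traceRpow_eq_sum_eigenvalues {A : Matrix n n 𝕜} (hA : A.IsHermitian) (r : ℝ) :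
    traceRpow A r = ∑ i, hA.eigenvalues i ^ r := by
  simp only [traceRpow, hA.roots_charpoly_eq_eigenvalues, Multiset.map_map, Function.comp_def,
    RCLike.ofReal_re, Finset.sum]

lemma traceRpow_transpose (A : Matrix n n 𝕜) (r : ℝ) : traceRpow Aᵀ r = traceRpow A r := by
  rw [traceRpow, Matrix.charpoly_transpose, traceRpow]

lemma traceRpow_submatrix_equiv (A : Matrix n n 𝕜) (e : m ≃ n) (r : ℝ) :
    traceRpow (A.submatrix e e) r = traceRpow A r := by
  rw [traceRpow, traceRpow, ← Matrix.charpoly_reindex e.symm A, Matrix.reindex_apply,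
    Equiv.symm_symm]

lemma traceRpow_mul_comm (A : Matrix m n 𝕜) (B : Matrix n m 𝕜) {r : ℝ} (hr : r ≠ 0) :
    traceRpow (A * B) r = traceRpow (B * A) r := by
  have hroots := congrArg Polynomial.roots (Matrix.charpoly_mul_comm' A B)
  have hX (k : ℕ) : (Polynomial.X ^ k : Polynomial 𝕜) ≠ 0 := pow_ne_zero k Polynomial.X_ne_zero
  rw [Polynomial.roots_mul (mul_ne_zero (hX _) (Matrix.charpoly_monic _).ne_zero),
    Polynomial.roots_mul (mul_ne_zero (hX _) (Matrix.charpoly_monic _).ne_zero)] at hroots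
  simpa only [Polynomial.roots_pow, Polynomial.roots_X, Multiset.map_add, Multiset.map_nsmul,
    Multiset.map_singleton, Multiset.sum_add, Multiset.sum_nsmul, Multiset.sum_singleton,
    RCLike.zero_re, map_zero, Real.zero_rpow hr, smul_zero, zero_add, traceRpow] using
    congrArg (fun t : Multiset 𝕜 => (t.map fun z => RCLike.re z ^ r).sum) hroots

lemma traceRpow_unitary_conj {U : Matrix n n 𝕜} (hU : U ∈ Matrix.unitaryGroup n 𝕜)
    (A : Matrix n n 𝕜) {r : ℝ} (hr : r ≠ 0) : traceRpow (Uᴴ * A * U) r = traceRpow A r := by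
  rw [traceRpow_mul_comm _ _ hr, ← Matrix.mul_assoc, ← Matrix.star_eq_conjTranspose,
    Matrix.mem_unitaryGroup_iff.1 hU, Matrix.one_mul]

lemma traceRpow_nonneg {A : Matrix n n 𝕜} (hA : A.PosSemidef) (r : ℝ) : 0 ≤ traceRpow A r := by
  rw [traceRpow_eq_sum_eigenvalues hA.1]
  exact Finset.sum_nonneg fun i _ => Real.rpow_nonneg (hA.eigenvalues_nonneg i) r

lemma traceRpow_le_one {A : Matrix n n 𝕜} (hA : A.PosSemidef) (htr : A.trace = 1) {r : ℝ}
    (hr : 1 ≤ r) : traceRpow A r ≤ 1 := by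
  have hsum : ∑ i, hA.1.eigenvalues i = 1 := by
    have := hA.1.trace_eq_sum_eigenvalues.symm.trans htr
    exact_mod_cast this
  rw [traceRpow_eq_sum_eigenvalues hA.1, ← hsum]
  refine Finset.sum_le_sum fun i _ => ?_
  have hle := Finset.single_le_sum (fun j _ => hA.eigenvalues_nonneg j) (Finset.mem_univ i)
  exact Real.rpow_le_self_of_le_one (hA.eigenvalues_nonneg i) (hle.trans_eq hsum) hr

lemma sum_rpow_diag_le_traceRpow {A : Matrix n n 𝕜} (hA : A.PosSemidef) {r : ℝ} (hr : 1 ≤ r) :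
    ∑ i, RCLike.re (A i i) ^ r ≤ traceRpow A r := by
  rw [traceRpow_eq_sum_eigenvalues hA.1]
  exact sum_convexOn_diag_le_sum_eigenvalues hA.1 (convexOn_rpow hr) hA.eigenvalues_nonneg

end TraceRpow

section PartialTrace

/-- The partial trace over the second tensor factor, `Tr_B`. -/
def partialTraceRight {R l m n : Type*} [AddCommMonoid R] [Fintype n]
    (Q : Matrix (l × n) (m × n) R) : Matrix l m R :=
  Matrix.of fun i i' => ∑ j, Q (i, j) (i', j)

/-- The partial trace over the first tensor factor, `Tr_A`. -/
def partialTraceLeft {R m n p : Type*} [AddCommMonoid R] [Fintype m]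
    (Q : Matrix (m × n) (m × p) R) : Matrix n p R :=
  Matrix.of fun j j' => ∑ i, Q (i, j) (i, j')

lemma partialTraceRight_swap {R m n p : Type*} [AddCommMonoid R] [Fintype m]
    (Q : Matrix (m × n) (m × p) R) :
    partialTraceRight (Q.submatrix Prod.swap Prod.swap) = partialTraceLeft Q := rfl

lemma partialTraceLeft_swap {R l m n : Type*} [AddCommMonoid R] [Fintype n]
    (Q : Matrix (l × n) (m × n) R) :
    partialTraceLeft (Q.submatrix Prod.swap Prod.swap) = partialTraceRight Q := rfl

lemma trace_partialTraceRight {R m n : Type*} [AddCommMonoid R] [Fintype m] [Fintype n]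
    (Q : Matrix (m × n) (m × n) R) : (partialTraceRight Q).trace = Q.trace :=
  (Fintype.sum_prod_type fun x => Q x x).symm

lemma trace_partialTraceLeft {R m n : Type*} [AddCommMonoid R] [Fintype m] [Fintype n]
    (Q : Matrix (m × n) (m × n) R) : (partialTraceLeft Q).trace = Q.trace :=
  (Fintype.sum_prod_type_right fun x => Q x x).symm

open scoped Kronecker

section CommSemiring

variable {R k l m n : Type*} [CommSemiring R] [Fintype l] [Fintype n]

lemma partialTraceRight_kronecker_one_mul [DecidableEq n] (A : Matrix k l R)
    (Q : Matrix (l × n) (m × n) R) :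
    partialTraceRight ((A ⊗ₖ (1 : Matrix n n R)) * Q) = A * partialTraceRight Q := by
  ext i i'
  simp only [partialTraceRight, Matrix.of_apply, Matrix.mul_apply, Matrix.kroneckerMap_apply,
    Matrix.one_apply, Fintype.sum_prod_type, mul_ite, ite_mul, mul_one, mul_zero, zero_mul,
    Finset.sum_ite_eq, Finset.mem_univ, if_true, Finset.mul_sum]
  exact Finset.sum_comm

lemma partialTraceRight_mul_kronecker_one [DecidableEq n] (Q : Matrix (k × n) (l × n) R)
    (A : Matrix l m R) :
    partialTraceRight (Q * (A ⊗ₖ (1 : Matrix n n R))) = partialTraceRight Q * A := by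
  ext i i'
  simp only [partialTraceRight, Matrix.of_apply, Matrix.mul_apply, Matrix.kroneckerMap_apply,
    Matrix.one_apply, Fintype.sum_prod_type, mul_ite, mul_one, mul_zero,
    Finset.sum_ite_eq', Finset.mem_univ, if_true, Finset.sum_mul]
  exact Finset.sum_comm

lemma partialTraceRight_one_kronecker_mul_comm {p : Type*} [Fintype m] [Fintype p] [DecidableEq l]
    [DecidableEq m] (B : Matrix n p R) (Q : Matrix (l × p) (m × n) R) :
    partialTraceRight (((1 : Matrix l l R) ⊗ₖ B) * Q) =
      partialTraceRight (Q * ((1 : Matrix m m R) ⊗ₖ B)) := by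
  ext i i'
  simp only [partialTraceRight, Matrix.of_apply, Matrix.mul_apply, Matrix.kroneckerMap_apply,
    Matrix.one_apply, Fintype.sum_prod_type_right, mul_ite, ite_mul, one_mul, mul_zero, zero_mul,
    Finset.sum_ite_eq, Finset.sum_ite_eq', Finset.mem_univ, if_true, mul_comm (B _ _)]
  exact Finset.sum_comm

end CommSemiring

section Unitary

variable {R m n : Type*} [CommRing R] [StarRing R] [Fintype m] [Fintype n]

lemma partialTraceRight_kronecker_conj [DecidableEq n] (Q : Matrix (m × n) (m × n) R)
    (U : Matrix m m R) {W : Matrix n n R} (hW : W ∈ Matrix.unitaryGroup n R) :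
    partialTraceRight ((U ⊗ₖ W)ᴴ * Q * (U ⊗ₖ W)) = Uᴴ * partialTraceRight Q * U := by
  classical
  have kronecker_eq : U ⊗ₖ W = ((1 : Matrix m m R) ⊗ₖ W) * (U ⊗ₖ (1 : Matrix n n R)) := by
    rw [← Matrix.mul_kronecker_mul, Matrix.one_mul, Matrix.mul_one]
  have one_kronecker_mul_star : ((1 : Matrix m m R) ⊗ₖ W) * ((1 : Matrix m m R) ⊗ₖ Wᴴ) = 1 := by
    rw [← Matrix.mul_kronecker_mul, ← Matrix.star_eq_conjTranspose,
      Matrix.mem_unitaryGroup_iff.1 hW, Matrix.one_mul, Matrix.one_kronecker_one]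
  calc partialTraceRight ((U ⊗ₖ W)ᴴ * Q * (U ⊗ₖ W))
      = partialTraceRight ((Uᴴ ⊗ₖ 1) * (((1 ⊗ₖ Wᴴ) * (Q * (1 ⊗ₖ W))) * (U ⊗ₖ 1))) := by
        simp only [kronecker_eq, Matrix.conjTranspose_mul, Matrix.conjTranspose_kronecker,
          Matrix.conjTranspose_one, Matrix.mul_assoc]
    _ = Uᴴ * (partialTraceRight (Q * (1 ⊗ₖ W) * (1 ⊗ₖ Wᴴ)) * U) := by
        rw [partialTraceRight_kronecker_one_mul, partialTraceRight_mul_kronecker_one,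
          partialTraceRight_one_kronecker_mul_comm]
    _ = Uᴴ * partialTraceRight Q * U := by
        rw [Matrix.mul_assoc Q, one_kronecker_mul_star, Matrix.mul_one, Matrix.mul_assoc]

lemma partialTraceLeft_kronecker_conj [DecidableEq m] (Q : Matrix (m × n) (m × n) R)
    {U : Matrix m m R} (hU : U ∈ Matrix.unitaryGroup m R) (W : Matrix n n R) :
    partialTraceLeft ((U ⊗ₖ W)ᴴ * Q * (U ⊗ₖ W)) = Wᴴ * partialTraceLeft Q * W := by
  have kronecker_swap : W ⊗ₖ U = (U ⊗ₖ W).submatrix (Equiv.prodComm n m) (Equiv.prodComm n m) := by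
    ext
    exact mul_comm _ _
  rw [← partialTraceRight_swap Q, ← partialTraceRight_kronecker_conj _ W hU, kronecker_swap,
    Matrix.conjTranspose_submatrix, ← Equiv.coe_prodComm, Matrix.submatrix_mul_equiv,
    Matrix.submatrix_mul_equiv, Equiv.coe_prodComm, partialTraceRight_swap]

end Unitary

section PosSemidef

variable {𝕜 m n : Type*} [RCLike 𝕜]

lemma posSemidef_partialTraceRight [Fintype n] {Q : Matrix (m × n) (m × n) 𝕜}
    (hQ : Q.PosSemidef) : (partialTraceRight Q).PosSemidef := by
  have sum_blocks : partialTraceRight Q = ∑ j, Q.submatrix (·, j) (·, j) := by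
    ext
    simp only [partialTraceRight, Matrix.of_apply, Matrix.sum_apply, Matrix.submatrix_apply]
  rw [sum_blocks]
  exact Matrix.posSemidef_sum _ fun j _ => hQ.submatrix _

lemma posSemidef_partialTraceLeft [Fintype m] {Q : Matrix (m × n) (m × n) 𝕜}
    (hQ : Q.PosSemidef) : (partialTraceLeft Q).PosSemidef :=
  posSemidef_partialTraceRight (hQ.submatrix Prod.swap)

end PosSemidef

end PartialTrace

section Entropy

variable {𝕜 m n : Type*} [RCLike 𝕜] [Fintype m] [DecidableEq m] [Fintype n] [DecidableEq n]

theorem sum_rpow_diag_partialTrace_add_le {Q : Matrix (m × n) (m × n) 𝕜} (hQ : Q.PosSemidef)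
    {r : ℝ} (hr : 1 < r) :
    (∑ i, RCLike.re (partialTraceRight Q i i) ^ r) ^ (1 / r) +
        (∑ j, RCLike.re (partialTraceLeft Q j j) ^ r) ^ (1 / r) ≤
      RCLike.re Q.trace + traceRpow Q r ^ (1 / r) := by
  have hdiag : ∀ x, 0 ≤ RCLike.re (Q x x) := fun x => (RCLike.nonneg_iff.1 hQ.diag_nonneg).1
  calc _ ≤ ∑ i, ∑ j, RCLike.re (Q (i, j) (i, j)) +
          (∑ x : m × n, RCLike.re (Q x x) ^ r) ^ (1 / r) := by
        simpa only [partialTraceRight, partialTraceLeft, Matrix.of_apply, map_sum] using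
          sum_rpow_marginals_le (p := fun i j => RCLike.re (Q (i, j) (i, j)))
            (fun i j => hdiag (i, j)) hr
    _ ≤ RCLike.re Q.trace + traceRpow Q r ^ (1 / r) := by
        rw [← Fintype.sum_prod_type fun x => RCLike.re (Q x x), Matrix.trace, map_sum]
        simp only [Matrix.diag_apply]
        have := sum_rpow_diag_le_traceRpow hQ hr.le
        have := Finset.sum_nonneg fun x (_ : x ∈ Finset.univ) => Real.rpow_nonneg (hdiag x) r
        gcongr

-- Audenaert's subadditivity of the Schatten norm `‖ρ‖_r = (Tr ρʳ)^(1/r)`.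
open scoped Kronecker in
theorem traceRpow_partialTrace_add_le {Q : Matrix (m × n) (m × n) 𝕜} (hQ : Q.PosSemidef) {r : ℝ}
    (hr : 1 < r) :
    traceRpow (partialTraceRight Q) r ^ (1 / r) + traceRpow (partialTraceLeft Q) r ^ (1 / r) ≤
      RCLike.re Q.trace + traceRpow Q r ^ (1 / r) := by
  obtain ⟨U, hU, hUdiag⟩ :=
    exists_unitary_conj_diag_eq_eigenvalues (posSemidef_partialTraceRight hQ).1
  obtain ⟨W, hW, hWdiag⟩ :=
    exists_unitary_conj_diag_eq_eigenvalues (posSemidef_partialTraceLeft hQ).1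
  have hUW : U ⊗ₖ W ∈ Matrix.unitaryGroup (m × n) 𝕜 := Matrix.kronecker_mem_unitary hU hW
  have htrace : ((U ⊗ₖ W)ᴴ * Q * (U ⊗ₖ W)).trace = Q.trace := by
    rw [Matrix.trace_mul_comm, ← Matrix.mul_assoc, ← Matrix.star_eq_conjTranspose,
      Matrix.mem_unitaryGroup_iff.1 hUW, Matrix.one_mul]
  have := sum_rpow_diag_partialTrace_add_le (hQ.conjTranspose_mul_mul_same (U ⊗ₖ W)) hr
  simpa only [partialTraceRight_kronecker_conj _ _ hW, partialTraceLeft_kronecker_conj _ hU,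
    hUdiag, hWdiag, traceRpow_unitary_conj hUW _ (by positivity : r ≠ 0), htrace,
    ← traceRpow_eq_sum_eigenvalues] using this

-- For `Q = Bᴴ * B`, the vector with entries `Bᴴ (i, j) x` purifies `Q` by a copy of `m × n`, and
-- `σ` is the transpose of its marginal on `n` and the purifying copy.
open scoped MatrixOrder in
theorem exists_complementary_state {Q : Matrix (m × n) (m × n) 𝕜} (hQ : Q.PosSemidef) :
    ∃ σ : Matrix (n × (m × n)) (n × (m × n)) 𝕜, σ.PosSemidef ∧ σ.trace = Q.trace ∧
      ∀ r : ℝ, r ≠ 0 →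
        traceRpow σ r = traceRpow (partialTraceRight Q) r ∧
        traceRpow (partialTraceRight σ) r = traceRpow (partialTraceLeft Q) r ∧
        traceRpow (partialTraceLeft σ) r = traceRpow Q r := by
  obtain ⟨B, rfl : _ = Bᴴ * B⟩ := CStarAlgebra.nonneg_iff_eq_star_mul_self.1 hQ.nonneg
  let M : Matrix m (n × (m × n)) 𝕜 := Matrix.of fun i x => star (B x.2 (i, x.1))
  have hA : M * Mᴴ = partialTraceRight (Bᴴ * B) := by
    ext i i'
    simp only [M, partialTraceRight, Matrix.mul_apply, Matrix.conjTranspose_apply,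
      Matrix.of_apply, star_star, Fintype.sum_prod_type]
  have hB : partialTraceRight (Mᴴ * M) = (partialTraceLeft (Bᴴ * B))ᵀ := by
    ext j j'
    simp only [M, partialTraceRight, partialTraceLeft, Matrix.mul_apply,
      Matrix.conjTranspose_apply, Matrix.transpose_apply, Matrix.of_apply, star_star,
      mul_comm (star _)]
    exact Finset.sum_comm
  have hAB : partialTraceLeft (Mᴴ * M) = B * Bᴴ := by
    ext x x'
    simp only [M, partialTraceLeft, Matrix.mul_apply, Matrix.conjTranspose_apply,
      Matrix.of_apply, star_star, Fintype.sum_prod_type_right]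
  refine ⟨Mᴴ * M, Matrix.posSemidef_conjTranspose_mul_self M, ?_, fun r hr => ⟨?_, ?_, ?_⟩⟩
  · rw [Matrix.trace_mul_comm, hA, trace_partialTraceRight]
  · rw [traceRpow_mul_comm _ _ hr, hA]
  · rw [hB, traceRpow_transpose]
  · rw [hAB, traceRpow_mul_comm _ _ hr]

theorem traceRpow_partialTraceLeft_add_le {Q : Matrix (m × n) (m × n) 𝕜} (hQ : Q.PosSemidef)
    {r : ℝ} (hr : 1 < r) :
    traceRpow (partialTraceLeft Q) r ^ (1 / r) + traceRpow Q r ^ (1 / r) ≤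
      RCLike.re Q.trace + traceRpow (partialTraceRight Q) r ^ (1 / r) := by
  obtain ⟨σ, hσ, htrace, hpow⟩ := exists_complementary_state hQ
  obtain ⟨hA, hB, hAB⟩ := hpow r (by positivity)
  simpa only [htrace, hA, hB, hAB] using traceRpow_partialTrace_add_le hσ hr

theorem traceRpow_partialTraceLeft_rpow_add_le {Q : Matrix (m × n) (m × n) 𝕜}
    (hQ : Q.PosSemidef) (hTr : Q.trace = 1) {r s : ℝ} (hr : 1 < r) (hs : 1 / r ≤ s) :
    traceRpow (partialTraceLeft Q) r ^ s + traceRpow Q r ^ s ≤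
      1 + traceRpow (partialTraceRight Q) r ^ s := by
  have hA := traceRpow_nonneg (posSemidef_partialTraceRight hQ) r
  have hB := traceRpow_nonneg (posSemidef_partialTraceLeft hQ) r
  have hAB := traceRpow_nonneg hQ r
  have hB₁ := traceRpow_le_one (posSemidef_partialTraceLeft hQ)
    ((trace_partialTraceLeft Q).trans hTr) hr.le
  have hAB₁ := traceRpow_le_one hQ hTr hr.le
  have hr₀ : 0 < r := by positivity
  have hrs : 1 ≤ r * s := by rwa [div_le_iff₀' hr₀] at hs
  have hinv : 0 ≤ 1 / r := by positivity
  have hnorm := traceRpow_partialTraceLeft_add_le hQ hr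
  rw [hTr, RCLike.one_re] at hnorm
  have hpow := rpow_add_rpow_le_one_add_rpow (Real.rpow_nonneg hB _)
    (Real.rpow_le_one hB hB₁ hinv) (Real.rpow_nonneg hAB _) (Real.rpow_le_one hAB hAB₁ hinv)
    (Real.rpow_nonneg hA _) hnorm hrs
  rwa [← Real.rpow_mul hA, ← Real.rpow_mul hB, ← Real.rpow_mul hAB, one_div,
    inv_mul_cancel_left₀ hr₀.ne'] at hpow

/-- The Hu–Ye unified entropy `HY_r^s(Q)` of a state on an arbitrary finite index type, with no
proof of Hermiticity as an argument. -/
noncomputable def unifiedEntropy (Q : Matrix n n 𝕜) (r s : ℝ) : ℝ :=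
  (1 / ((1 - r) * s)) * (traceRpow Q r ^ s - 1)

lemma unifiedEntropy_submatrix_equiv (Q : Matrix n n 𝕜) (e : m ≃ n) (r s : ℝ) :
    unifiedEntropy (Q.submatrix e e) r s = unifiedEntropy Q r s := by
  rw [unifiedEntropy, traceRpow_submatrix_equiv, unifiedEntropy]

theorem unifiedEntropy_partialTraceRight_sub_le {Q : Matrix (m × n) (m × n) 𝕜}
    (hQ : Q.PosSemidef) (hTr : Q.trace = 1) {r s : ℝ} (hr : 1 < r) (hs : 1 / r ≤ s) :
    unifiedEntropy (partialTraceRight Q) r s - unifiedEntropy (partialTraceLeft Q) r s ≤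
      unifiedEntropy Q r s := by
  have hs₀ : 0 < s := lt_of_lt_of_le (by positivity) hs
  have hconst : 1 / ((1 - r) * s) ≤ 0 :=
    one_div_nonpos.2 (mul_nonpos_of_nonpos_of_nonneg (by linarith) hs₀.le)
  have := mul_le_mul_of_nonpos_left (traceRpow_partialTraceLeft_rpow_add_le hQ hTr hr hs) hconst
  unfold unifiedEntropy
  linarith

theorem HY_triangle_inequality_general {Q : Matrix (m × n) (m × n) 𝕜} (hQ : Q.PosSemidef)
    (hTr : Q.trace = 1) {r s : ℝ} (hr : 1 < r) (hs : 1 / r ≤ s) :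
    |unifiedEntropy (partialTraceRight Q) r s - unifiedEntropy (partialTraceLeft Q) r s| ≤
      unifiedEntropy Q r s := by
  refine abs_sub_le_iff.2 ⟨unifiedEntropy_partialTraceRight_sub_le hQ hTr hr hs, ?_⟩
  have hTr' : (Q.submatrix Prod.swap Prod.swap).trace = 1 := by
    rw [← trace_partialTraceRight, partialTraceRight_swap, trace_partialTraceLeft, hTr]
  have hswap := unifiedEntropy_partialTraceRight_sub_le (hQ.submatrix Prod.swap) hTr' hr hs
  rwa [partialTraceRight_swap, partialTraceLeft_swap, ← Equiv.coe_prodComm,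
    unifiedEntropy_submatrix_equiv] at hswap

end Entropy

lemma HY_eq_unifiedEntropy {d : ℕ} {Q : Matrix (Fin d) (Fin d) ℂ} (hQ : Q.IsHermitian) (r s : ℝ) :
    HY hQ r s = unifiedEntropy Q r s := by
  rw [HY, unifiedEntropy, traceRpow_eq_sum_eigenvalues hQ]

/-- To compute the entropy of a bipartite state via eigenvalues we use a `Fin (dA*dB)`
reindexing of the product index type. -/
theorem HY_triangle_inequality {dA dB : ℕ}
    {Q : Matrix (Fin dA × Fin dB) (Fin dA × Fin dB) ℂ}
    (hQ : Q.PosSemidef) (hTr : Q.trace = 1)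
    (hQA : (ptrB Q).PosSemidef) (hQB : (ptrA Q).PosSemidef)
    (r s : ℝ) (hr : 1 < r) (hs : 1 / r ≤ s) :
    |HY hQA.1 r s - HY hQB.1 r s| ≤
      (1 / ((1 - r) * s)) * ((∑ i, hQ.1.eigenvalues i ^ r) ^ s - 1) := by
  rw [HY_eq_unifiedEntropy, HY_eq_unifiedEntropy, ← traceRpow_eq_sum_eigenvalues]
  exact HY_triangle_inequality_general hQ hTr hr hs
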